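/- Let q be a real number with 0 < q and q ≠ 1, let h₁, h₂, l₁, α₁, λ be real numbers and t₁, t₂ nonzero reals. Assume λ + α₁ = -N for some positive integer N (so (q^{λ+α₁};q)_n = 0 for all n > N and the series below is a finite sum), and assume q^{h₂-l₁+n}·t₂/t₁ ≠ 1 for all integers 1 ≤ n ≤ N and q^{h₁-l₁+k} ≠ 1 for all integers 1 ≤ k ≤ N. Define c_n = Σ_{k=0}^{n} q^{-nk+k²} / ((q^{h₁-l₁+1};q)_k (q;q)_{n-k} (q;q)_k) · (q^{h₁-h₂}·t₁/t₂)^k. Then the function g(x) = x^{-α₁} · Σ_{n=0}^{N} c_n · (q^{λ+α₁};q)_n/(q^{1+h₂-l₁}·t₂/t₁;q)_n · (x/(q^{l₁-1/2}t₁);q)_n · (q^{-λ-α₁+h₂+1/2}·t₂/x)^n satisfies the variant of the confluent q-hypergeometric equation of type (1,2) for all x > 0. -/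

import Mathlib

/-- The finite q-shifted factorial `(a;q)_n = ∏_{i=0}^{n-1} (1 - a q^i)`. -/
noncomputable def qPoch (q a : ℝ) (n : ℕ) : ℝ :=
  ∏ i ∈ Finset.range n, (1 - a * q ^ i)

/-- The variant of the confluent q-hypergeometric equation of type (1,2) (for `x > 0`). -/
def confEq12 (q h₁ h₂ l₁ α₁ lam t₁ t₂ : ℝ) (g : ℝ → ℝ) : Prop :=
  ∀ x : ℝ, 0 < x →
    q ^ (h₁ + h₂ - l₁ - 2 * lam + 1/2) * t₂ * (q ^ (l₁ - 1/2) * t₁ - x) * g (q * x)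
    + (x - q ^ (h₁ + 1/2) * t₁) * (x - q ^ (h₂ + 1/2) * t₂) * g (x / q)
    - (q ^ α₁ * x ^ 2
        - q ^ (h₁ + h₂ - lam + 1/2) * (q ^ (-h₂) * t₁ + q ^ (-h₁) * t₂ + q ^ (-l₁) * t₂) * x
        + q ^ (h₁ + h₂ - lam) * (q + 1) * t₁ * t₂) * g x = 0

lemma qPoch_zero' (q a : ℝ) : qPoch q a 0 = 1 := by simp [qPoch]

lemma qPoch_succ' (q a : ℝ) (n : ℕ) : qPoch q a (n+1) = qPoch q a n * (1 - a * q ^ n) := by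
  simp [qPoch, Finset.prod_range_succ]

lemma qPoch_succ_left (q a : ℝ) (n : ℕ) :
    qPoch q a (n+1) = (1 - a) * qPoch q (q * a) n := by
  simp only [qPoch, Finset.prod_range_succ', pow_zero, mul_one]
  rw [mul_comm]
  congr 1
  apply Finset.prod_congr rfl
  intro i _
  ring

lemma qPoch_ne (q a : ℝ) (n : ℕ) (h : ∀ i < n, a * q ^ i ≠ 1) : qPoch q a n ≠ 0 := by
  rw [qPoch, Finset.prod_ne_zero_iff]
  intro i hi
  rw [sub_ne_zero]
  exact (h i (Finset.mem_range.mp hi)).symm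

lemma qq_ne {q : ℝ} (hq : 0 < q) (hq1 : q ≠ 1) (n : ℕ) : 1 - q ^ (n+1) ≠ 0 := by
  rw [sub_ne_zero]
  intro h
  exact hq1 ((pow_eq_one_iff_of_nonneg hq.le (Nat.succ_ne_zero n)).mp h.symm)

lemma qPochq_ne {q : ℝ} (hq : 0 < q) (hq1 : q ≠ 1) (n : ℕ) : qPoch q q n ≠ 0 := by
  apply qPoch_ne
  intro i _ h
  apply qq_ne hq hq1 i
  rw [pow_succ']
  linarith

/-- The coefficient with `j = n - k`. -/
noncomputable def tt (q A : ℝ) (n k : ℕ) : ℝ :=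
  q ^ (k * k) / q ^ (n * k) / (qPoch q (q * A) k * qPoch q q (n - k) * qPoch q q k)

noncomputable def cc (q A r : ℝ) (n : ℕ) : ℝ :=
  ∑ k ∈ Finset.range (n + 1), tt q A n k * r ^ k

/-- generic coefficient identity, `n = k + 1 + j + ...` -/
lemma tt_id {q A : ℝ} (hq : 0 < q) (hq1 : q ≠ 1) (j k : ℕ)
    (hA : qPoch q (q * A) (k + 1) ≠ 0) :
    tt q A (k+1+j) k / q ^ (k+1+j+1) - A * tt q A (k+1+j) (k+1) + tt q A (k+1+j+1) k
      + (1 + A - (q+1) * q ^ (k+1+j+1) * A) * tt q A (k+1+j+1) (k+1)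
      - (1 - A * q ^ (k+1+j+2)) * (1 - q ^ (k+1+j+2)) * tt q A (k+1+j+2) (k+1) = 0 := by
  have e1 : k+1+j - k = j+1 := by omega
  have e2 : k+1+j - (k+1) = j := by omega
  have e3 : k+1+j+1 - k = j+2 := by omega
  have e4 : k+1+j+1 - (k+1) = j+1 := by omega
  have e5 : k+1+j+2 - (k+1) = j+2 := by omega
  simp only [tt, e1, e2, e3, e4, e5]
  rw [qPoch_succ'] at hA
  obtain ⟨hA1, hA2⟩ := mul_ne_zero_iff.mp hA
  have hj := qPochq_ne hq hq1 j
  have hk := qPochq_ne hq hq1 k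
  have h1 := qq_ne hq hq1 j
  have h2 := qq_ne hq hq1 (j+1)
  have h3 := qq_ne hq hq1 k
  simp only [qPoch_succ']
  generalize qPoch q (q*A) k = P1 at *
  generalize qPoch q q k = P2 at *
  generalize qPoch q q j = P3 at *
  have p1 : q ^ ((k+1)*(k+1)) = q^(k*k) * q^k*q^k*q := by ring
  have p2 : q ^ ((k+1+j)*k) = q^(k*k) * q^k * q^(j*k) := by ring
  have p3 : q ^ ((k+1+j)*(k+1)) = q^(k*k) * q^k * q^(j*k)*q^k*q^j*q := by ring
  have p4 : q ^ ((k+1+j+1)*k) = q^(k*k) * q^k* q^k * q^(j*k) := by ring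
  have p5 : q ^ ((k+1+j+1)*(k+1)) = q^(k*k) * q^k* q^k * q^(j*k) *q^k*q^j*q*q := by ring
  have p6 : q ^ ((k+1+j+2)*(k+1)) = q^(k*k) * q^k* q^k* q^k * q^(j*k) *q^k*q^j*q*q*q := by ring
  rw [p1, p2, p3, p4, p5, p6]
  have p7 : q ^ (k+1+j+1) = q^k * q^j * q * q := by ring
  have p8 : q ^ (k+1+j+2) = q^k * q^j * q * q * q := by ring
  rw [p7, p8]
  have z0 : q^(k*k) ≠ 0 := by positivity
  have z1 : q^(j*k) ≠ 0 := by positivity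
  have z2 : q^k ≠ 0 := by positivity
  have z3 : q^j ≠ 0 := by positivity
  have z4 : q ≠ 0 := by positivity
  have p9 : q * q^(j+1) = q * q* q^j := by ring
  rw [p9]
  rw [show q ^ (j+1) = q * q^j by ring] at h1
  rw [show q ^ (j+1+1) = q * q * q^j by ring] at h2
  rw [show q ^ (k+1) = q * q^k by ring] at h3
  generalize q^(k*k) = Z0 at *
  generalize q^(j*k) = Z1 at *
  generalize q^k = Z2 at *
  generalize q^j = Z3 at *
  generalize hD0 : 1 - q * A * Z2 = D0 at *
  generalize hD1 : 1 - q * Z2 = D1 at *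
  generalize hD2 : 1 - q * Z3 = D2 at *
  generalize hD3 : 1 - q * q * Z3 = D3 at *
  field_simp
  subst hD0 hD1 hD2 hD3
  ring

lemma tt_id0 {q A : ℝ} (hq : 0 < q) (hq1 : q ≠ 1) (m : ℕ) :
    - A * tt q A m 0
      + (1 + A - (q+1) * q ^ (m+1) * A) * tt q A (m+1) 0
      - (1 - A * q ^ (m+2)) * (1 - q ^ (m+2)) * tt q A (m+2) 0 = 0 := by
  simp only [tt, qPoch_succ', qPoch_zero', Nat.sub_zero, mul_zero, pow_zero]
  have hj := qPochq_ne hq hq1 m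
  have h1 := qq_ne hq hq1 m
  have h2 := qq_ne hq hq1 (m+1)
  rw [show q ^ (m+1) = q * q^m by ring] at *
  rw [show q ^ (m+1+1) = q * q * q^m by ring] at h2
  rw [show q ^ (m+2) = q * q * q^m by ring]
  rw [show q * (q * q^m) = q * q * q^m by ring]
  generalize qPoch q q m = P3 at *
  generalize q^m = Z3 at *
  generalize hD0 : 1 - q * Z3 = D0 at *
  generalize hD1 : 1 - q * q * Z3 = D1 at *
  field_simp
  subst hD0 hD1
  ring

/-- `k + 1 = n` where `n = m+1` -/
lemma tt_id1 {q A : ℝ} (hq : 0 < q) (hq1 : q ≠ 1) (m : ℕ)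
    (hA : qPoch q (q * A) (m + 1) ≠ 0) :
    tt q A m m / q ^ (m+1) + tt q A (m+1) m
      + (1 + A - (q+1) * q ^ (m+1) * A) * tt q A (m+1) (m+1)
      - (1 - A * q ^ (m+2)) * (1 - q ^ (m+2)) * tt q A (m+2) (m+1) = 0 := by
  have e3 : m+1 - m = 1 := by omega
  have e5 : m+2 - (m+1) = 1 := by omega
  simp only [tt, e3, e5, Nat.sub_self]
  rw [qPoch_succ'] at hA
  obtain ⟨hA1, hA2⟩ := mul_ne_zero_iff.mp hA
  have hk := qPochq_ne hq hq1 m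
  have h1 := qq_ne hq hq1 0
  have h3 := qq_ne hq hq1 m
  have hone : qPoch q q 1 = 1 - q := by simp [qPoch]
  rw [hone]
  simp only [qPoch_succ', qPoch_zero']
  generalize qPoch q (q*A) m = P1 at *
  generalize qPoch q q m = P2 at *
  rw [show q ^ ((m+1)*(m+1)) = q^(m*m) * q^m*q^m*q by ring,
    show q ^ ((m+1)*m) = q^(m*m) * q^m by ring,
    show q ^ ((m+2)*(m+1)) = q^(m*m) * q^m*q^m*q^m*q*q by ring]
  rw [show q ^ (m+1) = q * q^m by ring] at *
  rw [show q ^ (m+2) = q * q * q^m by ring]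
  have z0 : q^(m*m) ≠ 0 := by positivity
  have z2 : q^m ≠ 0 := by positivity
  simp only [zero_add, pow_one] at h1
  generalize q^(m*m) = Z0 at *
  generalize q^m = Z2 at *
  generalize hD0 : 1 - q * A * Z2 = D0 at *
  generalize hD1 : 1 - q * Z2 = D1 at *
  generalize hD2 : 1 - q = D2 at *
  field_simp
  subst hD0 hD1 hD2
  ring

/-- `k + 1 = n + 1` -/
lemma tt_id2 {q A : ℝ} (hq : 0 < q) (hq1 : q ≠ 1) (n : ℕ)
    (hA : qPoch q (q * A) (n + 1) ≠ 0) :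
    tt q A n n 
      - (1 - A * q ^ (n+1)) * (1 - q ^ (n+1)) * tt q A (n+1) (n+1) = 0 := by
  simp only [tt, Nat.sub_self]
  rw [qPoch_succ'] at hA
  obtain ⟨hA1, hA2⟩ := mul_ne_zero_iff.mp hA
  have hk := qPochq_ne hq hq1 n
  have h3 := qq_ne hq hq1 n
  simp only [qPoch_succ', qPoch_zero']
  generalize qPoch q (q*A) n = P1 at *
  generalize qPoch q q n = P2 at *
  rw [div_self (by positivity), div_self (by positivity)]
  rw [show q ^ (n+1) = q * q^n by ring] at *
  generalize q^n = Z2 at *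
  generalize hD0 : 1 - q * A * Z2 = D0 at *
  generalize hD1 : 1 - q * Z2 = D1 at *
  field_simp
  subst hD0 hD1
  ring

lemma cc_rec {q A r : ℝ} (hq : 0 < q) (hq1 : q ≠ 1) (m : ℕ)
    (hA : ∀ k ≤ m + 2, qPoch q (q * A) k ≠ 0) :
    cc q A r m * (r / q ^ (m+1) - A) + cc q A r (m+1) * (r + 1 + A - (q+1) * q^(m+1) * A)
      - (1 - A * q ^ (m+2)) * (1 - q ^ (m+2)) * cc q A r (m+2) = 0 := by
  have key : ∀ k ∈ Finset.range m,
      tt q A m k / q ^ (m+1) * r ^ (k+1) - A * (tt q A m (k+1) * r ^ (k+1))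
      + tt q A (m+1) k * r ^ (k+1)
      + (1 + A - (q+1) * q ^ (m+1) * A) * (tt q A (m+1) (k+1) * r ^ (k+1))
      - (1 - A * q ^ (m+2)) * (1 - q ^ (m+2)) * (tt q A (m+2) (k+1) * r ^ (k+1)) = 0 := by
    intro k hk
    obtain ⟨j, rfl⟩ := Nat.exists_eq_add_of_le (Nat.succ_le_of_lt (Finset.mem_range.mp hk))
    have := tt_id hq hq1 j k (A := A) (hA _ (by omega))
    simp only [Nat.succ_eq_add_one]
    linear_combination r ^ (k+1) * this
  have key' := Finset.sum_eq_zero key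
  simp only [Finset.sum_add_distrib, Finset.sum_sub_distrib, ← Finset.mul_sum] at key'
  have i0 := tt_id0 hq hq1 (A := A) m
  have i1 := tt_id1 hq hq1 m (hA _ (by omega))
  have i2 := tt_id2 hq hq1 (m+1) (hA _ (by omega))
  have c0a : cc q A r m * (r / q^(m+1)) =
      ∑ k ∈ Finset.range m, tt q A m k / q ^ (m+1) * r ^ (k+1)
        + tt q A m m / q^(m+1) * r^(m+1) := by
    rw [cc, Finset.sum_range_succ, add_mul, Finset.sum_mul]
    congr 1
    · apply Finset.sum_congr rfl
      intro k _
      ring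
    · ring
  have c0b : cc q A r m = ∑ k ∈ Finset.range m, tt q A m (k+1) * r ^ (k+1) + tt q A m 0 := by
    rw [cc, Finset.sum_range_succ']; simp
  have c1a : cc q A r (m+1) * r = ∑ k ∈ Finset.range m, tt q A (m+1) k * r ^ (k+1)
      + tt q A (m+1) m * r^(m+1) + tt q A (m+1) (m+1) * r^(m+2) := by
    rw [cc, Finset.sum_range_succ, Finset.sum_range_succ, add_mul, add_mul, Finset.sum_mul]
    congr 1
    · congr 1
      · apply Finset.sum_congr rfl
        intro k _
        ring
      · ring
    · ring
  have c1b : cc q A r (m+1) = ∑ k ∈ Finset.range m, tt q A (m+1) (k+1) * r ^ (k+1)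
      + tt q A (m+1) (m+1) * r ^(m+1) + tt q A (m+1) 0 := by
    rw [cc, Finset.sum_range_succ', Finset.sum_range_succ]; simp
  have c2 : cc q A r (m+2) = ∑ k ∈ Finset.range m, tt q A (m+2) (k+1) * r ^ (k+1)
      + tt q A (m+2) (m+1) * r ^(m+1) + tt q A (m+2) (m+2) * r ^(m+2) + tt q A (m+2) 0 := by
    rw [cc, Finset.sum_range_succ', Finset.sum_range_succ, Finset.sum_range_succ]; simp
  rw [c2]
  simp only [show m+1+1 = m+2 from rfl] at i2
  linear_combination c0a - A * c0b + c1a + (1 + A - (q+1) * q^(m+1) * A) * c1b + key' + i0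
    + r^(m+1) * i1 + r^(m+2) * i2

lemma cc_rec0 {q A r : ℝ} (hq : 0 < q) (hq1 : q ≠ 1) (hA : qPoch q (q * A) 1 ≠ 0) :
    cc q A r 0 * (r + 1 + A - (q+1) * A) - (1 - A * q) * (1 - q) * cc q A r 1 = 0 := by
  have h1 := qq_ne hq hq1 0
  have hone : ∀ a, qPoch q a 1 = 1 - a := by simp [qPoch]
  rw [hone] at hA
  simp [cc, Finset.sum_range_succ, tt, hone, qPoch_zero']
  simp only [zero_add, pow_one] at h1
  generalize hD0 : 1 - q * A = D0 at *
  generalize hD1 : 1 - q = D1 at *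
  field_simp
  subst hD0 hD1
  ring

noncomputable def ee (q u : ℝ) (n : ℕ) : ℝ := qPoch q u n / u ^ n

noncomputable def ss (q A B p : ℝ) (n : ℕ) : ℝ :=
  cc q A (A / B) n * (qPoch q p⁻¹ n / qPoch q (q * B) n) * (p * q * B) ^ n

lemma ss_rec {q A B p : ℝ} (hq : 0 < q) (hq1 : q ≠ 1) (hp : p ≠ 0) (hB0 : B ≠ 0) (m : ℕ)
    (hA : ∀ k ≤ m + 2, qPoch q (q * A) k ≠ 0) (hB : qPoch q (q * B) (m+2) ≠ 0) :
    ss q A B p m * (A * B * q / q ^ m * (p - q^m) * (p - q^(m+1)))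
      + ss q A B p (m+1) * ((p - q^(m+1)) * (q * (A+B+A*B) - (q+1) * q^(m+2) * A * B))
      + ss q A B p (m+2) * ((1 - A * q^(m+2)) * (1 - B * q^(m+2)) * (q^(m+2) - 1)) = 0 := by
  have h := cc_rec (r := A / B) hq hq1 m hA
  simp only [ss, qPoch_succ'] at hB ⊢
  obtain ⟨hB', hB2⟩ := mul_ne_zero_iff.mp hB
  obtain ⟨hB1, hB3⟩ := mul_ne_zero_iff.mp hB'
  generalize cc q A (A/B) m = c0 at *
  generalize cc q A (A/B) (m+1) = c1 at *
  generalize cc q A (A/B) (m+2) = c2 at *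
  generalize qPoch q (q*B) m = P1 at *
  generalize qPoch q p⁻¹ m = P2 at *
  rw [show (p*q*B)^(m+2) = (p*q*B)^m * (p*q*B) * (p*q*B) by ring,
    show (p*q*B)^(m+1) = (p*q*B)^m * (p*q*B) by ring]
  generalize (p*q*B)^m = W at *
  rw [show q ^ (m+1) = q * q^m by ring] at *
  rw [show q ^ (m+2) = q * q * q^m by ring] at *
  have z2 : q^m ≠ 0 := by positivity
  generalize q^m = Z at *
  have h4 : 1 - B * (q * q * Z) ≠ 0 := by
    intro h0; apply hB2; linear_combination h0
  have h' : c0 * (A / (q * Z) - A * B) + c1 * (A + B + A*B - (q+1)*(q*Z)*A*B)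
     - (1 - A * (q*q*Z)) * (1 - q*q*Z) * c2 * B = 0 := by
    field_simp at h ⊢
    linear_combination h
  have : c2 * (P2 * (1 - p⁻¹ * Z) * (1 - p⁻¹ * (q * Z)) /
            (P1 * (1 - q * B * Z) * (1 - q * B * (q * Z)))) * (W * (p * q * B) * (p * q * B)) *
        ((1 - A * (q * q * Z)) * (1 - B * (q * q * Z)) * (q * q * Z - 1))
     = - ((1 - A * (q*q*Z)) * (1 - q*q*Z) * c2 * B) * (P2 * (1 - p⁻¹ * Z) * (p - q * Z) /
            (P1 * (1 - q * B * Z))) * (W * (p * q * B) * q) := by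
    rw [show 1 - B * (q * q * Z) = 1 - q * B * (q * Z) by ring]
    generalize hD0 : 1 - q * B * Z = D0 at *
    generalize hD1 : 1 - q * B * (q * Z) = D1 at *
    field_simp
    ring
  rw [this]
  have : c0 * (P2 / P1) * W * (A * B * q / Z * (p - Z) * (p - q * Z))
     = c0 * (A / (q * Z) - A * B) * (P2 * (1 - p⁻¹ * Z) * (p - q * Z) /
            (P1 * (1 - q * B * Z))) * (W * (p * q * B) * q) := by
    generalize hD0 : 1 - q * B * Z = D0 at *
    field_simp
    subst hD0
    ring
  rw [this]
  linear_combination (P2 * (1 - p⁻¹ * Z) * (p - q * Z) /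
            (P1 * (1 - q * B * Z))) * (W * (p * q * B) * q) * h'

lemma ss_rec0 {q A B p : ℝ} (hq : 0 < q) (hq1 : q ≠ 1) (hp : p ≠ 0) (hB0 : B ≠ 0)
    (hA : qPoch q (q * A) 1 ≠ 0) (hB : qPoch q (q * B) 1 ≠ 0) :
    ss q A B p 0 * ((p - 1) * (q * (A+B+A*B) - (q+1) * q * A * B))
      + ss q A B p 1 * ((1 - A * q) * (1 - B * q) * (q - 1)) = 0 := by
  have h := cc_rec0 (r := A / B) hq hq1 hA
  have hone : ∀ a, qPoch q a 1 = 1 - a := by simp [qPoch]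
  simp only [ss, hone, qPoch_zero'] at hB ⊢
  have h4 : 1 - B * q ≠ 0 := by
    intro h0; apply hB; linear_combination h0
  simp only [show 1 - B * q = 1 - q * B by ring, pow_zero, mul_one, pow_one, div_one]
  have h' : cc q A (A/B) 0 * (A + B + A*B - (q+1)*A*B)
     - (1 - A * q) * (1 - q) * cc q A (A/B) 1 * B = 0 := by
    field_simp at h ⊢
    linear_combination h
  rw [show cc q A (A / B) 1 * ((1 - p⁻¹) / (1 - q * B)) * (p * q * B) *
      ((1 - A * q) * (1 - q * B) * (q - 1)) =
      (p - 1) * q * (- ((1 - A * q) * (1 - q) * cc q A (A/B) 1 * B)) by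
    generalize hD0 : 1 - q * B = D0 at *
    field_simp
    ring]
  linear_combination (p-1) * q * h'

/-- The operator, acting on a function. -/
def LL (q A B p u s0 s1 s2 : ℝ) : ℝ :=
  q * A * B * p^2 * (1 - u) * s1 + (u - q*A) * (u - q*B) * s2
    - (u^2 - q*p*(A+B+A*B)*u + p*q*(q+1)*A*B) * s0

lemma LL_ee {q A B p u : ℝ} (hq : 0 < q) (hu : u ≠ 0) (n : ℕ) :
    LL q A B p u (ee q u n) (ee q (q*u) n) (ee q (u/q) n) =
      u * (A * B * q / q ^ n * (p - q^n) * (p - q^(n+1)) * ee q u (n+1)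
      + (p - q^n) * (q * (A+B+A*B) - (q+1) * q^(n+1) * A * B) * ee q u n
      + (1 - A * q^n) * (1 - B * q^n) * (q^n - 1) * ee q u (n-1)) := by
  cases n with
  | zero =>
    have hone : ∀ a, qPoch q a 1 = 1 - a := by simp [qPoch]
    simp [LL, ee, qPoch_zero', hone]
    field_simp
    ring
  | succ m =>
    have h1 : (1 - u) * qPoch q (q*u) (m+1) = qPoch q u m * (1 - u * q^m) * (1 - u * q^(m+1)) := by
      rw [← qPoch_succ_left, qPoch_succ', qPoch_succ']
    have h2 : qPoch q (u/q) (m+1) = (1 - u/q) * qPoch q u m := by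
      rw [qPoch_succ_left, mul_div_cancel₀ _ hq.ne']
    simp only [LL, ee, Nat.add_sub_cancel]
    rw [show q * A * B * p^2 * (1 - u) * (qPoch q (q*u) (m+1) / (q*u)^(m+1)) =
      q * A * B * p^2 * ((1 - u) * qPoch q (q*u) (m+1)) / (q*u)^(m+1) by ring, h1, h2]
    simp only [qPoch_succ']
    generalize qPoch q u m = P
    rw [show (q*u)^(m+1) = q^m * u^m * q * u by ring, div_pow,
      show (u)^(m+1+1) = u^m * u * u by ring,
      show (u)^(m+1) = u^m * u by ring,
      show (q)^(m+1+1) = q^m * q * q by ring,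
      show (q)^(m+1) = q^m * q by ring]
    have z2 : q^m ≠ 0 := by positivity
    have z3 : u^m ≠ 0 := pow_ne_zero _ hu
    generalize q^m = Z at *
    generalize u^m = V at *
    field_simp
    ring

lemma LL_sum (q A B p u : ℝ) (n : ℕ) (s f0 f1 f2 : ℕ → ℝ) :
    LL q A B p u (∑ i ∈ Finset.range n, s i * f0 i) (∑ i ∈ Finset.range n, s i * f1 i)
      (∑ i ∈ Finset.range n, s i * f2 i) =
    ∑ i ∈ Finset.range n, s i * LL q A B p u (f0 i) (f1 i) (f2 i) := by
  induction n with
  | zero => simp [LL]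
  | succ n ih =>
    simp only [Finset.sum_range_succ, ← ih]
    simp only [LL]
    ring

lemma core {q A B p u : ℝ} (hq : 0 < q) (hq1 : q ≠ 1) (hB0 : B ≠ 0)
    (hu : u ≠ 0) (N : ℕ) (hN : 0 < N) (hp : p = q ^ N)
    (hA : ∀ k ≤ N, qPoch q (q * A) k ≠ 0) (hB : ∀ k ≤ N, qPoch q (q * B) k ≠ 0) :
    LL q A B p u (∑ n ∈ Finset.range (N+1), ss q A B p n * ee q u n)
      (∑ n ∈ Finset.range (N+1), ss q A B p n * ee q (q*u) n)
      (∑ n ∈ Finset.range (N+1), ss q A B p n * ee q (u/q) n) = 0 := by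
  have hp0 : p ≠ 0 := by rw [hp]; positivity
  rw [LL_sum]
  simp only [LL_ee hq hu]
  have tele : ∀ m, m + 1 ≤ N → ∑ n ∈ Finset.range (m+1), ss q A B p n * 
      (u * (A * B * q / q ^ n * (p - q^n) * (p - q^(n+1)) * ee q u (n+1)
      + (p - q^n) * (q * (A+B+A*B) - (q+1) * q^(n+1) * A * B) * ee q u n
      + (1 - A * q^n) * (1 - B * q^n) * (q^n - 1) * ee q u (n-1))) =
      u * (ss q A B p m * (A * B * q / q ^ m * (p - q^m) * (p - q^(m+1))) * ee q u (m+1)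
       - ss q A B p (m+1) * ((1 - A * q^(m+1)) * (1 - B * q^(m+1)) * (q^(m+1) - 1)) * ee q u m) := by
    intro m
    induction m with
    | zero =>
      intro hm
      have h := ss_rec0 hq hq1 hp0 hB0 (hA 1 hm) (hB 1 hm)
      simp
      linear_combination u * ee q u 0 * h
    | succ m ih =>
      intro hm
      have h := ss_rec hq hq1 hp0 hB0 m (fun k hk => hA k (by omega)) (hB (m+2) hm)
      rw [Finset.sum_range_succ, ih (by omega)]
      simp only [Nat.add_sub_cancel]
      linear_combination u * ee q u (m+1) * h
  obtain ⟨m, rfl⟩ : ∃ m, N = m + 1 := ⟨N - 1, by omega⟩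
  rw [Finset.sum_range_succ, tele m le_rfl, hp]
  simp only [Nat.add_sub_cancel]
  ring

theorem stmt7 (q h₁ h₂ l₁ α₁ lam t₁ t₂ : ℝ) (N : ℕ)
    (hq : 0 < q) (hq1 : q ≠ 1) (ht₁ : t₁ ≠ 0) (ht₂ : t₂ ≠ 0)
    (hN : 0 < N) (hNlam : lam + α₁ = -(N : ℝ))
    (hden₁ : ∀ n : ℕ, 1 ≤ n → n ≤ N → q ^ (h₂ - l₁ + (n : ℝ)) * t₂ / t₁ ≠ 1)
    (hden₂ : ∀ k : ℕ, 1 ≤ k → k ≤ N → q ^ (h₁ - l₁ + (k : ℝ)) ≠ 1) :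
    confEq12 q h₁ h₂ l₁ α₁ lam t₁ t₂ (fun x =>
      x ^ (-α₁) * ∑ n ∈ Finset.range (N + 1),
        (∑ k ∈ Finset.range (n + 1),
            q ^ (-(n : ℝ) * (k : ℝ) + (k : ℝ) ^ 2) /
                (qPoch q (q ^ (h₁ - l₁ + 1)) k * qPoch q q (n - k) * qPoch q q k) *
              (q ^ (h₁ - h₂) * t₁ / t₂) ^ k) *
          (qPoch q (q ^ (lam + α₁)) n / qPoch q (q ^ (1 + h₂ - l₁) * t₂ / t₁) n) *
          qPoch q (x / (q ^ (l₁ - 1/2) * t₁)) n *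
          (q ^ (-lam - α₁ + h₂ + 1/2) * t₂ / x) ^ n) := by
  intro x hx
  have hq0 : q ≠ 0 := hq.ne'
  have hp : q ^ (-lam - α₁) = q ^ N := by
    rw [show -lam - α₁ = (N : ℝ) by linarith, Real.rpow_natCast]
  have hpinv : q ^ (lam + α₁) = (q ^ N)⁻¹ := by
    rw [hNlam, Real.rpow_neg hq.le, Real.rpow_natCast]
  obtain ⟨T, hT⟩ : ∃ T, T = q ^ (l₁ - 1/2) * t₁ := ⟨_, rfl⟩
  obtain ⟨A, hAd⟩ : ∃ A, A = q ^ (h₁ - l₁) := ⟨_, rfl⟩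
  obtain ⟨B, hBd⟩ : ∃ B, B = q ^ (h₂ - l₁) * t₂ / t₁ := ⟨_, rfl⟩
  have hT0 : T ≠ 0 := by rw [hT]; positivity
  have hB0 : B ≠ 0 := by rw [hBd]; positivity
  have e1 : q ^ (h₁ - l₁ + 1) = q * A := by
    rw [Real.rpow_add hq, Real.rpow_one, hAd]; ring
  have e2 : q ^ (1 + h₂ - l₁) * t₂ / t₁ = q * B := by
    rw [show 1 + h₂ - l₁ = (h₂ - l₁) + 1 by ring, Real.rpow_add hq, Real.rpow_one, hBd]; ring
  have e3 : q ^ (h₁ - h₂) * t₁ / t₂ = A / B := by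
    rw [hAd, hBd, Real.rpow_sub hq, Real.rpow_sub hq, Real.rpow_sub hq]
    have := Real.rpow_pos_of_pos hq h₁
    have := Real.rpow_pos_of_pos hq h₂
    have := Real.rpow_pos_of_pos hq l₁
    field_simp
  have hsq : q ^ (1/2 : ℝ) * q ^ (1/2 : ℝ) = q := by
    rw [← Real.rpow_add hq]; norm_num
  have e4 : q ^ (-lam - α₁ + h₂ + 1/2) * t₂ = q ^ N * q * B * T := by
    rw [Real.rpow_add hq, Real.rpow_add hq, hp, hBd, hT, Real.rpow_sub hq, Real.rpow_sub hq]
    have := Real.rpow_pos_of_pos hq l₁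
    have h5 := Real.rpow_pos_of_pos hq (1/2)
    generalize q ^ N = p
    generalize q ^ h₂ = b
    generalize q ^ l₁ = l at *
    generalize q ^ (1/2 : ℝ) = s at *
    subst hsq
    field_simp
  have hA : ∀ k ≤ N, qPoch q (q * A) k ≠ 0 := by
    intro k hk
    apply qPoch_ne
    intro i hi h
    apply hden₂ (i+1) (by omega) (by omega)
    rw [Real.rpow_add hq, ← hAd, Real.rpow_natCast, ← h]
    ring
  have hB : ∀ k ≤ N, qPoch q (q * B) k ≠ 0 := by
    intro k hk
    apply qPoch_ne
    intro i hi h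
    apply hden₁ (i+1) (by omega) (by omega)
    rw [Real.rpow_add hq, Real.rpow_natCast, ← h, hBd]
    ring
  have hterm : ∀ y : ℝ, 0 < y → ∀ n : ℕ,
        (∑ k ∈ Finset.range (n + 1),
            q ^ (-(n : ℝ) * (k : ℝ) + (k : ℝ) ^ 2) /
                (qPoch q (q ^ (h₁ - l₁ + 1)) k * qPoch q q (n - k) * qPoch q q k) *
              (q ^ (h₁ - h₂) * t₁ / t₂) ^ k) *
          (qPoch q (q ^ (lam + α₁)) n / qPoch q (q ^ (1 + h₂ - l₁) * t₂ / t₁) n) *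
          qPoch q (y / (q ^ (l₁ - 1/2) * t₁)) n *
          (q ^ (-lam - α₁ + h₂ + 1/2) * t₂ / y) ^ n
        = ss q A B (q ^ N) n * ee q (y / T) n := by
    intro y hy n
    rw [e1, e2, e3, e4, hpinv, ← hT, ss, ee, cc]
    have hs : ∑ k ∈ Finset.range (n + 1),
            q ^ (-(n : ℝ) * (k : ℝ) + (k : ℝ) ^ 2) /
                (qPoch q (q * A) k * qPoch q q (n - k) * qPoch q q k) * (A / B) ^ k
        = ∑ k ∈ Finset.range (n + 1), tt q A n k * (A / B) ^ k := by
      apply Finset.sum_congr rfl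
      intro k _
      rw [tt, Real.rpow_add hq, neg_mul, Real.rpow_neg hq.le]
      have a1 : q ^ ((n : ℝ) * (k : ℝ)) = q ^ (n * k) := by
        rw [← Real.rpow_natCast]; push_cast; rfl
      have a2 : q ^ ((k : ℝ) ^ 2) = q ^ (k * k) := by
        rw [pow_two, ← Real.rpow_natCast]; push_cast; rfl
      rw [a1, a2]
      ring
    rw [hs]
    have : (q ^ N * q * B * T / y) ^ n = (q ^ N * q * B) ^ n / (y / T) ^ n := by
      rw [← div_pow]
      congr 1
      field_simp
    rw [this]
    ring
  have hx1 : 0 < q * x := by positivity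
  have hx2 : 0 < x / q := by positivity
  have hu : x / T ≠ 0 := by positivity
  have main := core hq hq1 hB0 hu N hN rfl hA hB
  simp only [hterm _ hx, hterm _ hx1, hterm _ hx2]
  rw [show q * x / T = q * (x / T) by ring, show x / q / T = x / T / q by ring]
  generalize (∑ n ∈ Finset.range (N+1), ss q A B (q ^ N) n * ee q (x / T) n) = S0 at *
  generalize (∑ n ∈ Finset.range (N+1), ss q A B (q ^ N) n * ee q (q * (x / T)) n) = S1 at *
  generalize (∑ n ∈ Finset.range (N+1), ss q A B (q ^ N) n * ee q (x / T / q) n) = S2 at *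
  rw [Real.mul_rpow hq.le hx.le, Real.div_rpow hx.le hq.le]
  rw [LL] at main
  have g1 := Real.rpow_pos_of_pos hq h₁
  have g2 := Real.rpow_pos_of_pos hq h₂
  have g3 := Real.rpow_pos_of_pos hq l₁
  have g4 := Real.rpow_pos_of_pos hq lam
  have g5 := Real.rpow_pos_of_pos hq α₁
  have g6 := Real.rpow_pos_of_pos hq (1/2)
  have c1 : q ^ (h₁ + h₂ - l₁ - 2 * lam + 1/2) * t₂ * (T - x) * q ^ (-α₁)
      = q ^ α₁ * T^2 * (q * A * B * (q ^ N) ^ 2 * (1 - x / T)) := by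
    rw [← hp, hAd, hBd]
    rw [show T - x = T * (1 - x / T) by field_simp]
    rw [show q ^ α₁ * T^2 = q ^ α₁ * T * T by ring]
    nth_rw 4 [hT]
    rw [two_mul]
    simp only [Real.rpow_add hq, Real.rpow_sub hq, Real.rpow_neg hq.le]
    generalize 1 - x / T = w
    generalize q ^ h₁ = a at *
    generalize q ^ h₂ = b at *
    generalize q ^ l₁ = l at *
    generalize q ^ lam = m at *
    generalize q ^ α₁ = r at *
    generalize q ^ (1/2 : ℝ) = s at *
    clear main hterm hden₁ hden₂
    subst hsq
    field_simp
  have c2 : (x - q ^ (h₁ + 1/2) * t₁) * (x - q ^ (h₂ + 1/2) * t₂)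
      = T^2 * ((x / T - q * A) * (x / T - q * B)) := by
    have i1 : q ^ (h₁ + 1/2) * t₁ = T * (q * A) := by
      rw [hAd, hT]
      simp only [Real.rpow_add hq, Real.rpow_sub hq]
      generalize q ^ h₁ = a at *
      generalize q ^ l₁ = l at *
      generalize q ^ (1/2 : ℝ) = s at *
      clear main hterm hden₁ hden₂
      subst hsq
      field_simp
    have i2 : q ^ (h₂ + 1/2) * t₂ = T * (q * B) := by
      rw [hBd, hT]
      simp only [Real.rpow_add hq, Real.rpow_sub hq]
      generalize q ^ h₂ = b at *
      generalize q ^ l₁ = l at *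
      generalize q ^ (1/2 : ℝ) = s at *
      clear main hterm hden₁ hden₂
      subst hsq
      field_simp
    rw [i1, i2]
    field_simp
  have c3 : q ^ α₁ * x ^ 2
        - q ^ (h₁ + h₂ - lam + 1/2) * (q ^ (-h₂) * t₁ + q ^ (-h₁) * t₂ + q ^ (-l₁) * t₂) * x
        + q ^ (h₁ + h₂ - lam) * (q + 1) * t₁ * t₂
      = q ^ α₁ * T^2 * ((x/T)^2 - q*(q^N)*(A+B+A*B)*(x/T) + (q^N)*q*(q+1)*A*B) := by
    rw [show q ^ α₁ * T^2 * ((x/T)^2 - q*(q^N)*(A+B+A*B)*(x/T) + (q^N)*q*(q+1)*A*B)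
      = q ^ α₁ * (x^2 - q*(q^N)*(A+B+A*B)*x*T + (q^N)*q*(q+1)*A*B*T^2) by field_simp]
    rw [← hp, hAd, hBd, hT]
    simp only [Real.rpow_add hq, Real.rpow_sub hq, Real.rpow_neg hq.le]
    generalize q ^ h₁ = a at *
    generalize q ^ h₂ = b at *
    generalize q ^ l₁ = l at *
    generalize q ^ lam = m at *
    generalize q ^ α₁ = r at *
    generalize q ^ (1/2 : ℝ) = s at *
    clear main hterm hden₁ hden₂
    subst hsq
    field_simp
  rw [← hT, c2, c3]
  have d2 : x ^ (-α₁) / q ^ (-α₁) = q ^ α₁ * x ^ (-α₁) := by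
    rw [Real.rpow_neg hq.le]; field_simp
  rw [d2]
  linear_combination x ^ (-α₁) * S1 * c1 + q ^ α₁ * T^2 * x ^ (-α₁) * main
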